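/- Let h : I → ℝ be a C³ diffeomorphism of an open interval with nonpositive Schwarzian derivative. Then for all distinct points a,b,c,d in I with a < b and c < d, log κ_h(a,b,c,d) = ∫_a^b ∫_c^d (1/(x-y)² - h'(x)h'(y)/(h(x)-h(y))²) dx dy ≥ 0. -/

import Mathlib

/-!
Off the diagonal the integrand `1 / (x - y)² - h' x h' y / (h x - h y)²` is the mixed derivative
`-∂ₓ∂ᵧ log ((h x - h y) / (x - y))`, so the double integral is the alternating sum over the
corners of the rectangle of the logarithms of the difference quotients, and this sum is `log κ`.

The intervals `[a, b]` and `[c, d]` may overlap, in which case the integrand is singular in form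
on the diagonal. In each variable the function `∂ₓ log ((h x - h y) / (x - y))` extends continuously
across `y = x` with value `h'' x / (2 h' x)` (`logSlopeDeriv`), so the fundamental theorem of
calculus with one exceptional point applies in each variable (`integral_kernel_right`,
`integral_logSlopeDeriv`). Integrability of the inner integrand comes from its sign.

That sign (`kernel_nonneg`) is where the Schwarzian enters: if `h' > 0` then `φ = h'^(-1/2)`
satisfies `φ'' = -S(h) φ / 2 ≥ 0`, so `φ` lies below its chord `ℓ` on `[x, y]`, and
`h y - h x = ∫ φ⁻² ≥ ∫ ℓ⁻² = (y - x) √(h' x h' y)`.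
-/

/-- Schwarzian derivative. -/
noncomputable def schwarzian (g : ℝ → ℝ) (x : ℝ) : ℝ :=
  iteratedDeriv 3 g x / deriv g x - 3 / 2 * (iteratedDeriv 2 g x / deriv g x) ^ 2

/-- Cross-ratio of four points. -/
noncomputable def chi (a b c d : ℝ) : ℝ := ((c - b) * (d - a)) / ((c - a) * (d - b))

/-- Distortion of the cross-ratio by a map `h`. -/
noncomputable def kappa (h : ℝ → ℝ) (a b c d : ℝ) : ℝ :=
  chi (h a) (h b) (h c) (h d) / chi a b c d

open Set Filter Topology MeasureTheory

/-! ### Sign of the integrand -/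

/-- Nonpositive Schwarzian derivative makes `φ = h'^(-1/2)` convex, because `φ'' = -S(h) φ / 2`.
Here `h₁`, `h₂`, `h₃` are the first three derivatives of `h`. -/
lemma convexOn_inv_sqrt_deriv {p q : ℝ} {h₁ h₂ h₃ : ℝ → ℝ}
    (H₂ : ∀ x ∈ Ioo p q, HasDerivAt h₁ (h₂ x) x)
    (H₃ : ∀ x ∈ Ioo p q, HasDerivAt h₂ (h₃ x) x)
    (hpos : ∀ x ∈ Ioo p q, 0 < h₁ x)
    (hS : ∀ x ∈ Ioo p q, h₃ x / h₁ x - 3 / 2 * (h₂ x / h₁ x) ^ 2 ≤ 0) :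
    ConvexOn ℝ (Ioo p q) (fun t => (√(h₁ t))⁻¹) := by
  have hφ : ∀ x ∈ Ioo p q, HasDerivAt (fun t => (√(h₁ t))⁻¹)
      (-(1 / 2) * (h₂ x * (√(h₁ x))⁻¹ ^ 3)) x := by
    intro x hx
    have hs : 0 < √(h₁ x) := Real.sqrt_pos.2 (hpos x hx)
    refine (((H₂ x hx).sqrt (hpos x hx).ne').fun_inv hs.ne').congr_deriv ?_
    field_simp
  refine convexOn_of_hasDerivWithinAt2_nonneg (convex_Ioo p q)
    (f' := fun x => -(1 / 2) * (h₂ x * (√(h₁ x))⁻¹ ^ 3))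
    (f'' := fun x => -(1 / 2) * (√(h₁ x))⁻¹ *
      (h₃ x / h₁ x - 3 / 2 * (h₂ x / h₁ x) ^ 2))
    (fun x hx => (hφ x hx).continuousAt.continuousWithinAt) ?_ ?_ ?_ <;>
    rw [interior_Ioo] <;> intro x hx
  · exact (hφ x hx).hasDerivWithinAt
  · refine HasDerivAt.hasDerivWithinAt ?_
    have hs : 0 < √(h₁ x) := Real.sqrt_pos.2 (hpos x hx)
    refine (((H₃ x hx).mul ((hφ x hx).pow 3)).const_mul (-(1 / 2))).congr_deriv ?_
    have e : h₁ x = √(h₁ x) ^ 2 := (Real.sq_sqrt (hpos x hx).le).symm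
    simp only [Pi.pow_apply, inv_pow]
    rw [show h₃ x / h₁ x = h₃ x / √(h₁ x) ^ 2 by rw [← e],
      show h₂ x / h₁ x = h₂ x / √(h₁ x) ^ 2 by rw [← e]]
    simp only [Nat.cast_ofNat, Nat.add_one_sub_one]
    field_simp
    ring
  · have hs : 0 < (√(h₁ x))⁻¹ := inv_pos.2 (Real.sqrt_pos.2 (hpos x hx))
    nlinarith [hS x hx]

/-- Bounding the convex function `φ = h'^(-1/2)` by its chord `ℓ` on `[x, y]` gives
`h y - h x = ∫ φ⁻² ≥ ∫ ℓ⁻² = (y - x) / (φ x φ y)`. -/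
lemma mul_sqrt_deriv_le_sub {p q : ℝ} {h h₁ h₂ h₃ : ℝ → ℝ}
    (H₁ : ∀ x ∈ Ioo p q, HasDerivAt h (h₁ x) x)
    (H₂ : ∀ x ∈ Ioo p q, HasDerivAt h₁ (h₂ x) x)
    (H₃ : ∀ x ∈ Ioo p q, HasDerivAt h₂ (h₃ x) x)
    (hpos : ∀ x ∈ Ioo p q, 0 < h₁ x)
    (hS : ∀ x ∈ Ioo p q, h₃ x / h₁ x - 3 / 2 * (h₂ x / h₁ x) ^ 2 ≤ 0)
    {x y : ℝ} (hx : x ∈ Ioo p q) (hy : y ∈ Ioo p q) (hxy : x < y) :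
    (y - x) * (√(h₁ x) * √(h₁ y)) ≤ h y - h x := by
  have hconv := convexOn_inv_sqrt_deriv H₂ H₃ hpos hS
  have hsx : 0 < √(h₁ x) := Real.sqrt_pos.2 (hpos x hx)
  have hsy : 0 < √(h₁ y) := Real.sqrt_pos.2 (hpos y hy)
  set u := (√(h₁ x))⁻¹ with hu
  set v := (√(h₁ y))⁻¹ with hv
  have hu0 : 0 < u := inv_pos.2 hsx
  have hv0 : 0 < v := inv_pos.2 hsy
  have hd : 0 < y - x := sub_pos.2 hxy
  set m := (v - u) / (y - x) with hm
  have hmul : m * (y - x) = v - u := by rw [hm]; field_simp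
  have hsub : Icc x y ⊆ Ioo p q := fun t ht => ⟨hx.1.trans_le ht.1, ht.2.trans_lt hy.2⟩
  have hle : ∀ t ∈ Icc x y, (√(h₁ t))⁻¹ ≤ u + m * (t - x) := by
    intro t ht
    have hsum : (y - t) / (y - x) + (t - x) / (y - x) = 1 := by field_simp; ring
    have := hconv.2 hx hy (div_nonneg (sub_nonneg.2 ht.2) hd.le)
      (div_nonneg (sub_nonneg.2 ht.1) hd.le) hsum
    have e : ((y - t) / (y - x)) • x + ((t - x) / (y - x)) • y = t := by
      simp only [smul_eq_mul]; field_simp; ring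
    rw [e] at this
    refine this.trans_eq ?_
    simp only [smul_eq_mul, ← hu, ← hv, hm]
    field_simp; ring
  have hinv : ∀ t ∈ Icc x y, 0 < (√(h₁ t))⁻¹ := fun t ht =>
    inv_pos.2 (Real.sqrt_pos.2 (hpos t (hsub ht)))
  have hℓ : ∀ t ∈ Icc x y, 0 < u + m * (t - x) := fun t ht => (hinv t ht).trans_le (hle t ht)
  have hF : ∀ t ∈ Icc x y, HasDerivAt (fun t => h t - (t - x) / (u * (u + m * (t - x))))
      (h₁ t - 1 / (u + m * (t - x)) ^ 2) t := by
    intro t ht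
    have h0 := hℓ t ht
    have hl : HasDerivAt (fun t => u * (u + m * (t - x))) (u * (m * 1)) t :=
      ((((hasDerivAt_id t).sub_const x).const_mul m).const_add u).const_mul u
    have := (H₁ t (hsub ht)).fun_sub
      (((hasDerivAt_id t).sub_const x).fun_div hl (mul_pos hu0 h0).ne')
    refine this.congr_deriv ?_
    simp only [id]
    field_simp
    ring
  have hmono : MonotoneOn (fun t => h t - (t - x) / (u * (u + m * (t - x)))) (Icc x y) := by
    refine monotoneOn_of_hasDerivWithinAt_nonneg (convex_Icc x y)
      (fun t ht => (hF t ht).continuousAt.continuousWithinAt)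
      (fun t ht => (hF t (interior_subset ht)).hasDerivWithinAt) ?_
    intro t ht
    have ht' := interior_subset ht
    have e : h₁ t = 1 / (√(h₁ t))⁻¹ ^ 2 := by
      rw [inv_pow, Real.sq_sqrt (hpos t (hsub ht')).le, one_div, inv_inv]
    rw [sub_nonneg]
    refine le_of_le_of_eq ?_ e.symm
    have := hinv t ht'
    have := hle t ht'
    gcongr
  have := hmono (left_mem_Icc.2 hxy.le) (right_mem_Icc.2 hxy.le) hxy.le
  simp only [sub_self, zero_div, sub_zero, hmul, add_sub_cancel] at this
  have e : (y - x) * (√(h₁ x) * √(h₁ y)) = (y - x) / (u * v) := by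
    rw [hu, hv]; field_simp
  rw [e]; linarith

lemma kernel_nonneg_of_deriv_pos {p q : ℝ} {h h₁ h₂ h₃ : ℝ → ℝ}
    (H₁ : ∀ x ∈ Ioo p q, HasDerivAt h (h₁ x) x)
    (H₂ : ∀ x ∈ Ioo p q, HasDerivAt h₁ (h₂ x) x)
    (H₃ : ∀ x ∈ Ioo p q, HasDerivAt h₂ (h₃ x) x)
    (hpos : ∀ x ∈ Ioo p q, 0 < h₁ x)
    (hS : ∀ x ∈ Ioo p q, h₃ x / h₁ x - 3 / 2 * (h₂ x / h₁ x) ^ 2 ≤ 0)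
    {x y : ℝ} (hx : x ∈ Ioo p q) (hy : y ∈ Ioo p q) :
    0 ≤ 1 / (x - y) ^ 2 - h₁ x * h₁ y / (h x - h y) ^ 2 := by
  wlog hxy : x < y generalizing x y
  · rcases eq_or_ne x y with rfl | hne
    · simp
    · have := this hy hx (lt_of_le_of_ne (not_lt.1 hxy) hne.symm)
      rwa [mul_comm, ← neg_sub x y, neg_sq, ← neg_sub (h x), neg_sq] at this
  have key := mul_sqrt_deriv_le_sub H₁ H₂ H₃ hpos hS hx hy hxy
  have hsx : 0 < √(h₁ x) := Real.sqrt_pos.2 (hpos x hx)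
  have hsy : 0 < √(h₁ y) := Real.sqrt_pos.2 (hpos y hy)
  have hd : 0 < y - x := sub_pos.2 hxy
  have hD : 0 < h y - h x := lt_of_lt_of_le (by positivity) key
  rw [sub_nonneg, ← neg_sub y x, neg_sq, ← neg_sub (h y), neg_sq, div_le_div_iff₀ (by positivity)
    (by positivity)]
  have := pow_le_pow_left₀ (by positivity) key 2
  rw [mul_pow, mul_pow, Real.sq_sqrt (hpos x hx).le, Real.sq_sqrt (hpos y hy).le] at this
  linarith

/-- The integrand is nonnegative when `S(h) ≤ 0`; on the diagonal it has the junk value `0`. -/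
lemma kernel_nonneg {p q : ℝ} {h h₁ h₂ h₃ : ℝ → ℝ}
    (H₁ : ∀ x ∈ Ioo p q, HasDerivAt h (h₁ x) x)
    (H₂ : ∀ x ∈ Ioo p q, HasDerivAt h₁ (h₂ x) x)
    (H₃ : ∀ x ∈ Ioo p q, HasDerivAt h₂ (h₃ x) x)
    (hne : ∀ x ∈ Ioo p q, h₁ x ≠ 0)
    (hS : ∀ x ∈ Ioo p q, h₃ x / h₁ x - 3 / 2 * (h₂ x / h₁ x) ^ 2 ≤ 0)
    {x y : ℝ} (hx : x ∈ Ioo p q) (hy : y ∈ Ioo p q) :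
    0 ≤ 1 / (x - y) ^ 2 - h₁ x * h₁ y / (h x - h y) ^ 2 := by
  rcases hasDerivWithinAt_forall_lt_or_forall_gt_of_forall_ne (convex_Ioo p q)
    (fun x hx => (H₁ x hx).hasDerivWithinAt) hne with hneg | hpos
  · -- The kernel and the Schwarzian are unchanged when `h` is replaced by `-h`.
    have := kernel_nonneg_of_deriv_pos (h := fun x => -h x) (h₁ := fun x => -h₁ x)
      (h₂ := fun x => -h₂ x) (h₃ := fun x => -h₃ x) (fun x hx => (H₁ x hx).fun_neg)
      (fun x hx => (H₂ x hx).fun_neg) (fun x hx => (H₃ x hx).fun_neg)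
      (fun x hx => neg_pos.2 (hneg x hx)) (fun x hx => by simpa using hS x hx) hx hy
    rwa [neg_mul_neg, neg_sub_neg, ← neg_sub (h x), neg_sq] at this
  · exact kernel_nonneg_of_deriv_pos H₁ H₂ H₃ hpos hS hx hy

/-! ### The logarithmic derivative of the difference quotient -/

/-- Second-order Taylor expansion at `c` in Peano form. -/
lemma tendsto_taylor_two {h h₁ : ℝ → ℝ} {c k : ℝ}
    (H₁ : ∀ᶠ x in 𝓝 c, HasDerivAt h (h₁ x) x) (H₂ : HasDerivAt h₁ k c) :
    Tendsto (fun y => (h y - h c - h₁ c * (y - c)) / (y - c) ^ 2) (𝓝[≠] c) (𝓝 (k / 2)) := by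
  have hc : HasDerivAt h (h₁ c) c := H₁.self_of_nhds
  refine HasDerivAt.lhopital_zero_nhdsNE (f' := fun y => h₁ y - h₁ c)
    (g' := fun y => 2 * (y - c)) ?_ ?_ ?_ ?_ ?_ ?_
  · filter_upwards [H₁.filter_mono nhdsWithin_le_nhds] with y hy
    simpa using (hy.sub_const (h c)).fun_sub (((hasDerivAt_id y).sub_const c).const_mul (h₁ c))
  · refine Eventually.of_forall fun y => ?_
    simpa using ((hasDerivAt_id y).sub_const c).fun_pow 2
  · filter_upwards [self_mem_nhdsWithin] with y hy
    exact mul_ne_zero two_ne_zero (sub_ne_zero.2 hy)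
  · have : ContinuousAt (fun y => h y - h c - h₁ c * (y - c)) c := by
      have := hc.continuousAt
      fun_prop
    simpa using this.tendsto.mono_left nhdsWithin_le_nhds
  · have : ContinuousAt (fun y : ℝ => (y - c) ^ 2) c := by fun_prop
    simpa using this.tendsto.mono_left nhdsWithin_le_nhds
  · refine ((hasDerivAt_iff_tendsto_slope.1 H₂).div_const 2).congr fun y => ?_
    rw [slope_def_field, div_div, mul_comm]

/-- The continuous extension to the diagonal of
`∂ₓ log ((h x - h y) / (x - y)) = h' x / (h x - h y) - 1 / (x - y)`,
where `h₁`, `h₂` stand for the first two derivatives of `h`. -/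
noncomputable def logSlopeDeriv (h h₁ h₂ : ℝ → ℝ) (x y : ℝ) : ℝ :=
  if x = y then h₂ x / (2 * h₁ x) else h₁ x / (h x - h y) - 1 / (x - y)

lemma logSlopeDeriv_of_ne {h h₁ h₂ : ℝ → ℝ} {x y : ℝ} (hxy : x ≠ y) :
    logSlopeDeriv h h₁ h₂ x y = h₁ x / (h x - h y) - 1 / (x - y) := if_neg hxy

section

variable {p q : ℝ} {h h₁ h₂ : ℝ → ℝ}

lemma hasDerivAt_logSlopeDeriv (hinj : InjOn h (Ioo p q))
    (H₁ : ∀ x ∈ Ioo p q, HasDerivAt h (h₁ x) x)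
    {x y : ℝ} (hx : x ∈ Ioo p q) (hy : y ∈ Ioo p q) (hxy : x ≠ y) :
    HasDerivAt (logSlopeDeriv h h₁ h₂ x)
      (-(1 / (x - y) ^ 2 - h₁ x * h₁ y / (h x - h y) ^ 2)) y := by
  have hD : h x - h y ≠ 0 := sub_ne_zero.2 fun e => hxy (hinj hx hy e)
  have hd : x - y ≠ 0 := sub_ne_zero.2 hxy
  have key := (((H₁ y hy).const_sub (h x)).inv hD).const_mul (h₁ x)
  have key2 := key.fun_sub (((hasDerivAt_id y).const_sub x).inv hd)
  refine (key2.congr_deriv ?_).congr_of_eventuallyEq ?_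
  · simp only [id]; field_simp; ring
  · filter_upwards [isOpen_ne.mem_nhds hxy.symm] with t ht
    rw [logSlopeDeriv_of_ne (Ne.symm ht)]
    simp [div_eq_mul_inv]

lemma tendsto_div_slope (hd : ∀ x ∈ Ioo p q, h₁ x ≠ 0)
    (H₁ : ∀ x ∈ Ioo p q, HasDerivAt h (h₁ x) x) {c : ℝ} (hc : c ∈ Ioo p q) {f : ℝ → ℝ} {k : ℝ}
    (hf : Tendsto f (𝓝[≠] c) (𝓝 k)) :
    Tendsto (fun y => f y / slope h c y) (𝓝[≠] c) (𝓝 (k / h₁ c)) :=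
  hf.div (hasDerivAt_iff_tendsto_slope.1 (H₁ c hc)) (hd c hc)

lemma continuousOn_logSlopeDeriv_right (hinj : InjOn h (Ioo p q))
    (hd : ∀ x ∈ Ioo p q, h₁ x ≠ 0)
    (H₁ : ∀ x ∈ Ioo p q, HasDerivAt h (h₁ x) x)
    (H₂ : ∀ x ∈ Ioo p q, HasDerivAt h₁ (h₂ x) x) {x : ℝ} (hx : x ∈ Ioo p q) :
    ContinuousOn (logSlopeDeriv h h₁ h₂ x) (Ioo p q) := by
  intro y hy
  refine ContinuousAt.continuousWithinAt ?_
  rcases eq_or_ne x y with rfl | hxy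
  · rw [← continuousWithinAt_compl_self, ContinuousWithinAt]
    have hev : ∀ᶠ t in 𝓝 x, t ∈ Ioo p q := isOpen_Ioo.mem_nhds hx
    have T := tendsto_div_slope hd H₁ hx
      (tendsto_taylor_two (hev.mono H₁) (H₂ x hx))
    rw [show logSlopeDeriv h h₁ h₂ x x = h₂ x / 2 / h₁ x by
      rw [logSlopeDeriv, if_pos rfl, div_div]]
    refine T.congr' ?_
    filter_upwards [self_mem_nhdsWithin, hev.filter_mono nhdsWithin_le_nhds] with t ht ht'
    have ht : t ≠ x := ht
    have h1 : t - x ≠ 0 := sub_ne_zero.2 ht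
    have h2 : x - t ≠ 0 := sub_ne_zero.2 ht.symm
    have h3 : h t - h x ≠ 0 := sub_ne_zero.2 fun e => ht (hinj ht' hx e)
    have h4 : h x - h t ≠ 0 := sub_ne_zero.2 fun e => ht (hinj ht' hx e.symm)
    rw [logSlopeDeriv_of_ne ht.symm, slope_def_field, ← neg_sub t x, ← neg_sub (h t) (h x)]
    field_simp
    ring
  · exact (hasDerivAt_logSlopeDeriv hinj H₁ hx hy hxy).continuousAt

lemma continuousOn_logSlopeDeriv_left (hinj : InjOn h (Ioo p q))
    (hd : ∀ x ∈ Ioo p q, h₁ x ≠ 0)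
    (H₁ : ∀ x ∈ Ioo p q, HasDerivAt h (h₁ x) x)
    (H₂ : ∀ x ∈ Ioo p q, HasDerivAt h₁ (h₂ x) x) {c : ℝ} (hc : c ∈ Ioo p q) :
    ContinuousOn (fun x => logSlopeDeriv h h₁ h₂ x c) (Ioo p q) := by
  intro x hx
  refine ContinuousAt.continuousWithinAt ?_
  rcases eq_or_ne x c with rfl | hxc
  · rw [← continuousWithinAt_compl_self, ContinuousWithinAt]
    have hev : ∀ᶠ t in 𝓝 x, t ∈ Ioo p q := isOpen_Ioo.mem_nhds hx
    -- `h' t (t - x) - (h t - h x)` over `(t - x)²` is the slope of `h'` minus the Taylor quotient.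
    have T := tendsto_div_slope hd H₁ hx
      ((hasDerivAt_iff_tendsto_slope.1 (H₂ x hx)).sub
        (tendsto_taylor_two (hev.mono H₁) (H₂ x hx)))
    rw [show logSlopeDeriv h h₁ h₂ x x = (h₂ x - h₂ x / 2) / h₁ x by
      rw [logSlopeDeriv, if_pos rfl, sub_half, div_div]]
    refine T.congr' ?_
    filter_upwards [self_mem_nhdsWithin, hev.filter_mono nhdsWithin_le_nhds] with t ht ht'
    have ht : t ≠ x := ht
    have h1 : t - x ≠ 0 := sub_ne_zero.2 ht
    have h3 : h t - h x ≠ 0 := sub_ne_zero.2 fun e => ht (hinj ht' hx e)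
    rw [logSlopeDeriv_of_ne ht, slope_def_field, slope_def_field]
    field_simp
    ring
  · have hD : h x - h c ≠ 0 := sub_ne_zero.2 fun e => hxc (hinj hx hc e)
    have hd : x - c ≠ 0 := sub_ne_zero.2 hxc
    have h1 := (H₁ x hx).continuousAt
    have h2 := (H₂ x hx).continuousAt
    have : ContinuousAt (fun x => h₁ x / (h x - h c) - 1 / (x - c)) x := by
      fun_prop (disch := assumption)
    refine this.congr ?_
    filter_upwards [isOpen_ne.mem_nhds hxc] with t ht
    rw [logSlopeDeriv_of_ne ht]

/-! ### The two one-variable integrals -/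

/-- The inner integral. It is valid for every `x`, including `x ∈ [c, d]`, where the integrand takes
the junk value `0` at the single point `y = x`. -/
lemma integral_kernel_right (hinj : InjOn h (Ioo p q))
    (hd : ∀ x ∈ Ioo p q, h₁ x ≠ 0)
    (H₁ : ∀ x ∈ Ioo p q, HasDerivAt h (h₁ x) x)
    (H₂ : ∀ x ∈ Ioo p q, HasDerivAt h₁ (h₂ x) x)
    (hK : ∀ x ∈ Ioo p q, ∀ y ∈ Ioo p q,
      0 ≤ 1 / (x - y) ^ 2 - h₁ x * h₁ y / (h x - h y) ^ 2)
    {x c d : ℝ} (hx : x ∈ Ioo p q) (hc : c ∈ Ioo p q) (hdd : d ∈ Ioo p q) :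
    ∫ y in c..d, (1 / (x - y) ^ 2 - h₁ x * h₁ y / (h x - h y) ^ 2) =
      logSlopeDeriv h h₁ h₂ x c - logSlopeDeriv h h₁ h₂ x d := by
  have hsub : ∀ {u v : ℝ}, u ∈ Ioo p q → v ∈ Ioo p q → uIcc u v ⊆ Ioo p q :=
    fun hu hv => ordConnected_Ioo.uIcc_subset hu hv
  have hder : ∀ y ∈ Ioo p q, x ≠ y → HasDerivAt (fun y => -logSlopeDeriv h h₁ h₂ x y)
      (1 / (x - y) ^ 2 - h₁ x * h₁ y / (h x - h y) ^ 2) y := fun y hy hxy => by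
    simpa using (hasDerivAt_logSlopeDeriv (h₂ := h₂) hinj H₁ hx hy hxy).fun_neg
  have hcont := (continuousOn_logSlopeDeriv_right hinj hd H₁ H₂ hx).fun_neg
  -- On either side of the diagonal, integrability comes from the sign of the derivative.
  have hint : ∀ u ∈ Ioo p q, IntervalIntegrable
      (fun y => 1 / (x - y) ^ 2 - h₁ x * h₁ y / (h x - h y) ^ 2) volume u x := by
    intro u hu
    have hm : ∀ y ∈ Ioo (min u x) (max u x), y ∈ Ioo p q ∧ x ≠ y := by
      intro y hy
      refine ⟨hsub hu hx ⟨hy.1.le, hy.2.le⟩, ?_⟩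
      rintro rfl
      rcases le_total u x with h | h <;> simp [h] at hy
    exact intervalIntegral.intervalIntegrable_deriv_of_nonneg (hcont.mono (hsub hu hx))
      (fun y hy => hder y (hm y hy).1 (hm y hy).2) (fun y hy => hK x hx y (hm y hy).1)
  rw [integral_eq_of_hasDerivAt_off_countable _ _ (countable_singleton x)
    (hcont.mono (hsub hc hdd)) (fun y hy => hder y (hsub hc hdd ⟨hy.1.1.le, hy.1.2.le⟩)
      (fun e => hy.2 e.symm)) ((hint c hc).trans (hint d hdd).symm)]
  ring

lemma dslope_ne_zero (hinj : InjOn h (Ioo p q)) (hd : ∀ x ∈ Ioo p q, h₁ x ≠ 0)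
    (H₁ : ∀ x ∈ Ioo p q, HasDerivAt h (h₁ x) x) {c x : ℝ} (hc : c ∈ Ioo p q)
    (hx : x ∈ Ioo p q) : dslope h c x ≠ 0 := by
  rcases eq_or_ne x c with rfl | hxc
  · rw [dslope_same, (H₁ x hx).deriv]; exact hd x hx
  · rw [dslope_of_ne _ hxc, slope_def_field]
    exact div_ne_zero (sub_ne_zero.2 fun e => hxc (hinj hx hc e)) (sub_ne_zero.2 hxc)

lemma intervalIntegrable_logSlopeDeriv (hinj : InjOn h (Ioo p q))
    (hd : ∀ x ∈ Ioo p q, h₁ x ≠ 0)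
    (H₁ : ∀ x ∈ Ioo p q, HasDerivAt h (h₁ x) x)
    (H₂ : ∀ x ∈ Ioo p q, HasDerivAt h₁ (h₂ x) x)
    {a b c : ℝ} (ha : a ∈ Ioo p q) (hb : b ∈ Ioo p q) (hc : c ∈ Ioo p q) :
    IntervalIntegrable (fun x => logSlopeDeriv h h₁ h₂ x c) volume a b :=
  ((continuousOn_logSlopeDeriv_left hinj hd H₁ H₂ hc).mono
    (ordConnected_Ioo.uIcc_subset ha hb)).intervalIntegrable

/-- The outer integral. The difference quotient enters as `dslope h c`, which extends it across
`x = c` by `h' c`; its sign is irrelevant because `Real.log` is even. -/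
lemma integral_logSlopeDeriv (hinj : InjOn h (Ioo p q))
    (hd : ∀ x ∈ Ioo p q, h₁ x ≠ 0)
    (H₁ : ∀ x ∈ Ioo p q, HasDerivAt h (h₁ x) x)
    (H₂ : ∀ x ∈ Ioo p q, HasDerivAt h₁ (h₂ x) x)
    {a b c : ℝ} (ha : a ∈ Ioo p q) (hb : b ∈ Ioo p q) (hc : c ∈ Ioo p q) :
    ∫ x in a..b, logSlopeDeriv h h₁ h₂ x c =
      Real.log (dslope h c b) - Real.log (dslope h c a) := by
  have hsub : uIcc a b ⊆ Ioo p q := ordConnected_Ioo.uIcc_subset ha hb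
  refine integral_eq_of_hasDerivAt_off_countable (fun x => Real.log (dslope h c x)) _
    (countable_singleton c) ?_ ?_
    (intervalIntegrable_logSlopeDeriv hinj hd H₁ H₂ ha hb hc)
  · intro x hx
    refine ContinuousAt.continuousWithinAt (ContinuousAt.log ?_
      (dslope_ne_zero hinj hd H₁ hc (hsub hx)))
    rcases eq_or_ne x c with rfl | hxc
    · exact continuousAt_dslope_same.2 (H₁ x hc).differentiableAt
    · exact (continuousAt_dslope_of_ne hxc).2 (H₁ x (hsub hx)).continuousAt
  · rintro x ⟨hx, hxc : x ≠ c⟩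
    have hx : x ∈ Ioo p q := hsub ⟨hx.1.le, hx.2.le⟩
    have hD : h x - h c ≠ 0 := sub_ne_zero.2 fun e => hxc (hinj hx hc e)
    have hd : x - c ≠ 0 := sub_ne_zero.2 hxc
    rw [logSlopeDeriv_of_ne hxc]
    refine ((((H₁ x hx).sub_const (h c)).log hD).fun_sub
      (((hasDerivAt_id x).sub_const c).log hd)).congr_of_eventuallyEq ?_
    filter_upwards [isOpen_ne.mem_nhds hxc, isOpen_Ioo.mem_nhds hx] with t ht ht'
    rw [dslope_of_ne _ ht, slope_def_field, Real.log_div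
      (sub_ne_zero.2 fun e => ht (hinj ht' hc e)) (sub_ne_zero.2 ht)]
    rfl

end

lemma kappa_eq_dslope (h : ℝ → ℝ) {a b c d : ℝ}
    (hdist : a ≠ c ∧ a ≠ d ∧ b ≠ c ∧ b ≠ d) :
    kappa h a b c d = dslope h c b * dslope h d a / (dslope h c a * dslope h d b) := by
  obtain ⟨hac, had, hbc, hbd⟩ := hdist
  simp only [dslope_of_ne _ hac, dslope_of_ne _ had, dslope_of_ne _ hbc, dslope_of_ne _ hbd,
    slope_def_field, kappa, chi]
  rw [← neg_sub b c, ← neg_sub a c, ← neg_sub b d, ← neg_sub a d, ← neg_sub (h b) (h c),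
    ← neg_sub (h a) (h c), ← neg_sub (h b) (h d), ← neg_sub (h a) (h d)]
  simp only [neg_mul_neg, div_eq_mul_inv, mul_inv, inv_inv]
  ring

/-- For a C³ diffeomorphism `h` of an open interval with nonpositive Schwarzian
derivative and distinct `a < b`, `c < d` in the interval,
`log κ_h(a,b,c,d) = ∫_a^b ∫_c^d (1/(x-y)² - h'(x)h'(y)/(h(x)-h(y))²) dy dx ≥ 0`. -/
theorem log_kappa_double_integral (p q : ℝ) (h : ℝ → ℝ)
    (hC3 : ContDiffOn ℝ 3 h (Set.Ioo p q))
    (hinj : Set.InjOn h (Set.Ioo p q))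
    (hd : ∀ x ∈ Set.Ioo p q, deriv h x ≠ 0)
    (hS : ∀ x ∈ Set.Ioo p q, schwarzian h x ≤ 0)
    (a b c d : ℝ) (ha : a ∈ Set.Ioo p q) (hb : b ∈ Set.Ioo p q)
    (hc : c ∈ Set.Ioo p q) (hdd : d ∈ Set.Ioo p q)
    (hab : a < b) (hcd : c < d)
    (hdist : a ≠ c ∧ a ≠ d ∧ b ≠ c ∧ b ≠ d) :
    Real.log (kappa h a b c d) =
        (∫ x in a..b, ∫ y in c..d,
          (1 / (x - y) ^ 2 - deriv h x * deriv h y / (h x - h y) ^ 2)) ∧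
      0 ≤ Real.log (kappa h a b c d) := by
  have C₂ := hC3.deriv_of_isOpen isOpen_Ioo (m := 2) (by norm_num)
  have C₁ := C₂.deriv_of_isOpen isOpen_Ioo (m := 1) (by norm_num)
  have H₁ : ∀ x ∈ Ioo p q, HasDerivAt h (deriv h x) x := fun x hx =>
    ((hC3.differentiableOn (by norm_num)).differentiableAt (isOpen_Ioo.mem_nhds hx)).hasDerivAt
  have H₂ : ∀ x ∈ Ioo p q, HasDerivAt (deriv h) (deriv (deriv h) x) x := fun x hx =>
    ((C₂.differentiableOn (by norm_num)).differentiableAt (isOpen_Ioo.mem_nhds hx)).hasDerivAt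
  have H₃ : ∀ x ∈ Ioo p q, HasDerivAt (deriv (deriv h)) (deriv (deriv (deriv h)) x) x :=
    fun x hx =>
      ((C₁.differentiableOn (by norm_num)).differentiableAt (isOpen_Ioo.mem_nhds hx)).hasDerivAt
  have hK : ∀ x ∈ Ioo p q, ∀ y ∈ Ioo p q,
      0 ≤ 1 / (x - y) ^ 2 - deriv h x * deriv h y / (h x - h y) ^ 2 := fun x hx y hy =>
    kernel_nonneg H₁ H₂ H₃ hd (fun t ht => by
      simpa [schwarzian, iteratedDeriv_eq_iterate] using hS t ht) hx hy
  have hsub : uIcc a b ⊆ Ioo p q := ordConnected_Ioo.uIcc_subset ha hb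
  have hsub' : uIcc c d ⊆ Ioo p q := ordConnected_Ioo.uIcc_subset hc hdd
  have hne : ∀ {c x : ℝ}, c ∈ Ioo p q → x ∈ Ioo p q → dslope h c x ≠ 0 :=
    fun hc hx => dslope_ne_zero hinj hd H₁ hc hx
  have key : Real.log (kappa h a b c d) = ∫ x in a..b, ∫ y in c..d,
      (1 / (x - y) ^ 2 - deriv h x * deriv h y / (h x - h y) ^ 2) := by
    rw [intervalIntegral.integral_congr
      (fun x hx => integral_kernel_right hinj hd H₁ H₂ hK (hsub hx) hc hdd),
      intervalIntegral.integral_sub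
        (intervalIntegrable_logSlopeDeriv hinj hd H₁ H₂ ha hb hc)
        (intervalIntegrable_logSlopeDeriv hinj hd H₁ H₂ ha hb hdd),
      integral_logSlopeDeriv hinj hd H₁ H₂ ha hb hc,
      integral_logSlopeDeriv hinj hd H₁ H₂ ha hb hdd,
      kappa_eq_dslope h hdist,
      Real.log_div (mul_ne_zero (hne hc hb) (hne hdd ha)) (mul_ne_zero (hne hc ha) (hne hdd hb)),
      Real.log_mul (hne hc hb) (hne hdd ha), Real.log_mul (hne hc ha) (hne hdd hb)]
    ring
  refine ⟨key, key ▸ ?_⟩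
  refine intervalIntegral.integral_nonneg hab.le fun x hx => ?_
  refine intervalIntegral.integral_nonneg hcd.le fun y hy => ?_
  exact hK x (hsub (Icc_subset_uIcc hx)) y (hsub' (Icc_subset_uIcc hy))
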